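/- Let n ≥ 1, let V : ℝⁿ → ℝ be bounded, continuous and nonnegative, and let u : [0,∞) × ℝⁿ → ℝ be a smooth solution of ∂ₜ²u − Δₓu + V·u + ∂ₜu = 0 such that for every T > 0 there is R > 0 with u(t,·) supported in the ball of radius R for all t ∈ [0,T]. Then for all t ≥ 0 the identity (1+t)E(t) + ∫₀ᵗ (1+s)‖∂ₜu(s,·)‖² ds = E(0) + ∫₀ᵗ E(s) ds holds. -/

import Mathlib

open MeasureTheory

noncomputable section

/-- The Laplacian of `f : ℝⁿ → ℝ`, as the sum of second derivatives in the
coordinate directions. -/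
def lap {n : ℕ} (f : EuclideanSpace ℝ (Fin n) → ℝ) (x : EuclideanSpace ℝ (Fin n)) : ℝ :=
  ∑ i : Fin n, iteratedFDeriv ℝ 2 f x ![EuclideanSpace.single i 1, EuclideanSpace.single i 1]

/-- The total energy `E(t) = ½∫ (|∂ₜu|² + |∇ₓu|² + V|u|²) dx`. -/
def energy {n : ℕ} (V : EuclideanSpace ℝ (Fin n) → ℝ)
    (u : ℝ → EuclideanSpace ℝ (Fin n) → ℝ) (t : ℝ) : ℝ :=
  (1/2) * ∫ x, ((deriv (fun s => u s x) t) ^ 2 + ‖gradient (u t) x‖ ^ 2 + V x * (u t x) ^ 2)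

/-!
Differentiating the energy under the integral sign and applying Green's identity gives
`E'(t) = ∫ ∂ₜu (∂ₜ²u - Δu + Vu) dx`, which the equation turns into the dissipation law
`E'(t) = -‖∂ₜu(t)‖²`. The claim is this law multiplied by `1 + t` and integrated by parts in time.

The support of `u(t, ·)` is controlled for `t ∈ [0, T]` only, so `E` is differentiated within this
interval; since one-sided derivatives are unique there, `∂ₜu(t, ·)` has the same support bound up
to the endpoints.
-/

open Function Set InnerProductSpace
open scoped Gradient Laplacian Topology RealInnerProductSpace

section TimeDerivative

variable {E G : Type*} [NormedAddCommGroup E] [NormedSpace ℝ E] [NormedAddCommGroup G]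
  [NormedSpace ℝ G] {u : ℝ → E → G}

/-- The partial derivative `∂ₜu` of a function `u` of time and space, again as a function of time
and space, so that it can be iterated. -/
def timeDeriv {X G : Type*} [NormedAddCommGroup G] [NormedSpace ℝ G] (u : ℝ → X → G) (t : ℝ)
    (x : X) : G :=
  deriv (fun s => u s x) t

theorem contDiff_uncurry_timeDeriv {k m : WithTop ℕ∞} (hu : ContDiff ℝ k (uncurry u))
    (hmk : m + 1 ≤ k) : ContDiff ℝ m (uncurry (timeDeriv u)) := by
  have hflip : ContDiff ℝ k (uncurry fun (p : ℝ × E) s => u s p.2) :=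
    hu.comp (f := fun q : (ℝ × E) × ℝ => (q.2, q.1.2)) (by fun_prop)
  exact hflip.fderiv_apply contDiff_fst contDiff_const hmk

theorem hasDerivAt_timeDeriv (hu : Differentiable ℝ (uncurry u)) (t : ℝ) (x : E) :
    HasDerivAt (fun s => u s x) (timeDeriv u t x) t :=
  DifferentiableAt.hasDerivAt (by fun_prop)

theorem eq_zero_of_hasDerivAt_of_forall_mem_eq_zero {f : ℝ → G} {f' : G} {S : Set ℝ} {t : ℝ}
    (hS : UniqueDiffWithinAt ℝ S t) (ht : t ∈ S) (hf : HasDerivAt f f' t)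
    (hzero : ∀ s ∈ S, f s = 0) : f' = 0 :=
  hS.eq_deriv S hf.hasDerivWithinAt ((hasDerivWithinAt_const t S 0).congr hzero (hzero t ht))

theorem timeDeriv_eq_zero_of_notMem {K : Set E} {S : Set ℝ} {t : ℝ}
    (hu : Differentiable ℝ (uncurry u))
    (hsupp : ∀ s ∈ S, ∀ x ∉ K, u s x = 0) (hS : UniqueDiffWithinAt ℝ S t) (ht : t ∈ S) :
    ∀ x ∉ K, timeDeriv u t x = 0 := fun x hx =>
  eq_zero_of_hasDerivAt_of_forall_mem_eq_zero hS ht (hasDerivAt_timeDeriv hu t x)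
    fun s hs => hsupp s hs x hx

theorem timeDeriv_eq_fderiv_uncurry (hu : Differentiable ℝ (uncurry u)) (t : ℝ) (x : E) :
    timeDeriv u t x = fderiv ℝ (uncurry u) (t, x) (1, 0) :=
  ((hu (t, x)).hasFDerivAt.comp_hasDerivAt (f := fun s => (s, x)) t
    ((hasDerivAt_id t).prodMk (hasDerivAt_const t x))).deriv

theorem fderiv_eq_fderiv_uncurry_comp_inr (hu : Differentiable ℝ (uncurry u)) (t : ℝ) (x : E) :
    fderiv ℝ (u t) x = (fderiv ℝ (uncurry u) (t, x)).comp (.inr ℝ ℝ E) :=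
  ((hu (t, x)).hasFDerivAt.comp x (hasFDerivAt_prodMk_right t x)).fderiv

theorem hasDerivAt_fderiv_timeDeriv (hu : ContDiff ℝ 2 (uncurry u)) (t : ℝ) (x : E) :
    HasDerivAt (fun s => fderiv ℝ (u s) x) (fderiv ℝ (timeDeriv u t) x) t := by
  have hdiff : Differentiable ℝ (uncurry u) := hu.differentiable two_ne_zero
  have hfderiv : HasFDerivAt (fderiv ℝ (uncurry u))
      (fderiv ℝ (fderiv ℝ (uncurry u)) (t, x)) (t, x) :=
    ((hu.fderiv_right (m := 1) le_rfl).differentiable one_ne_zero _).hasFDerivAt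
  have hsymm : IsSymmSndFDerivAt ℝ (uncurry u) (t, x) :=
    hu.contDiffAt.isSymmSndFDerivAt (by simp)
  have htime : HasDerivAt (fun s => fderiv ℝ (uncurry u) (s, x))
      (fderiv ℝ (fderiv ℝ (uncurry u)) (t, x) (1, 0)) t :=
    hfderiv.comp_hasDerivAt t ((hasDerivAt_id t).prodMk (hasDerivAt_const t x))
  have hspace : HasFDerivAt (fun y => fderiv ℝ (uncurry u) (t, y))
      ((fderiv ℝ (fderiv ℝ (uncurry u)) (t, x)).comp (.inr ℝ ℝ E)) x :=
    hfderiv.comp x (hasFDerivAt_prodMk_right t x)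
  have hmixed : fderiv ℝ (timeDeriv u t) x =
      (fderiv ℝ (fderiv ℝ (uncurry u)) (t, x) (1, 0)).comp (.inr ℝ ℝ E) := by
    rw [funext (timeDeriv_eq_fderiv_uncurry hdiff t),
      (hspace.clm_apply (hasFDerivAt_const _ x)).fderiv]
    ext v
    simp [hsymm.eq (0, v) (1, 0)]
  simp_rw [fderiv_eq_fderiv_uncurry_comp_inr hdiff, hmixed]
  simpa using htime.clm_comp (hasDerivAt_const t (ContinuousLinearMap.inr ℝ ℝ E))

end TimeDerivative

section CompactSupport

variable {X G : Type*} [TopologicalSpace X] [T2Space X] [MeasurableSpace X]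
  [OpensMeasurableSpace X] [NormedAddCommGroup G] [NormedSpace ℝ G]
  [SecondCountableTopologyEither X G] {μ : Measure X} [IsFiniteMeasureOnCompacts μ]
  {K : Set X} {F F' : ℝ → X → G}

theorem hasDerivAt_setIntegral_of_isCompact (hK : IsCompact K) (hF : ∀ s, Continuous (F s))
    (hF' : Continuous (uncurry F')) (hderiv : ∀ s x, HasDerivAt (fun r => F r x) (F' s x) s)
    (t : ℝ) : HasDerivAt (fun s => ∫ x in K, F s x ∂μ) (∫ x in K, F' t x ∂μ) t := by
  obtain ⟨C, hC⟩ := ((isCompact_closedBall t 1).prod hK).exists_bound_of_continuousOn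
    hF'.continuousOn
  refine (hasDerivAt_integral_of_dominated_loc_of_deriv_le (bound := fun _ => C)
    (Metric.closedBall_mem_nhds t one_pos) ?_ ?_ ?_ ?_ ?_ ?_).2
  · exact .of_forall fun s => (hF s).aestronglyMeasurable
  · exact (hF t).continuousOn.integrableOn_compact hK
  · exact (hF'.uncurry_left t).aestronglyMeasurable
  · exact ae_restrict_of_forall_mem hK.measurableSet fun x hx s hs => hC (s, x) ⟨hs, hx⟩
  · exact integrableOn_const hK.measure_ne_top
  · exact .of_forall fun x s _ => hderiv s x

theorem hasDerivWithinAt_integral_of_compact_support {S : Set ℝ} {t : ℝ} (hK : IsCompact K)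
    (hF : ∀ s, Continuous (F s)) (hF' : Continuous (uncurry F'))
    (hderiv : ∀ s x, HasDerivAt (fun r => F r x) (F' s x) s)
    (hsupp : ∀ s ∈ S, ∀ x ∉ K, F s x = 0) (hS : UniqueDiffWithinAt ℝ S t) (ht : t ∈ S) :
    HasDerivWithinAt (fun s => ∫ x, F s x ∂μ) (∫ x, F' t x ∂μ) S t := by
  have hF_eq : ∀ s ∈ S, ∫ x, F s x ∂μ = ∫ x in K, F s x ∂μ := fun s hs =>
    (setIntegral_eq_integral_of_forall_compl_eq_zero (hsupp s hs)).symm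
  have hF'_eq : ∫ x, F' t x ∂μ = ∫ x in K, F' t x ∂μ :=
    (setIntegral_eq_integral_of_forall_compl_eq_zero fun x hx =>
      eq_zero_of_hasDerivAt_of_forall_mem_eq_zero hS ht (hderiv t x)
        fun s hs => hsupp s hs x hx).symm
  rw [hF'_eq]
  exact (hasDerivAt_setIntegral_of_isCompact hK hF hF' hderiv t).hasDerivWithinAt.congr
    hF_eq (hF_eq t ht)

end CompactSupport

section Green

theorem integral_fderiv_mul_eq_neg_integral_mul_fderiv {E : Type*} [NormedAddCommGroup E]
    [NormedSpace ℝ E] [FiniteDimensional ℝ E] [MeasurableSpace E] [BorelSpace E] {μ : Measure E}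
    [μ.IsAddHaarMeasure] {f g : E → ℝ} (hf : ContDiff ℝ 1 f) (hg : ContDiff ℝ 1 g)
    (hfs : HasCompactSupport f) (v : E) :
    ∫ x, fderiv ℝ f x v * g x ∂μ = -∫ x, f x * fderiv ℝ g x v ∂μ := by
  have hf' : Continuous fun x => fderiv ℝ f x v := by fun_prop
  have hg' : Continuous fun x => fderiv ℝ g x v := by fun_prop
  rw [integral_mul_fderiv_eq_neg_fderiv_mul_of_integrable, neg_neg]
  · exact (hf'.mul hg.continuous).integrable_of_hasCompactSupport (hfs.fderiv_apply ℝ v).mul_right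
  · exact (hf.continuous.mul hg').integrable_of_hasCompactSupport hfs.mul_right
  · exact (hf.continuous.mul hg.continuous).integrable_of_hasCompactSupport hfs.mul_right
  · exact fun x _ => hf.differentiable one_ne_zero x
  · exact fun x _ => hg.differentiable one_ne_zero x

variable {E : Type*} [NormedAddCommGroup E] [InnerProductSpace ℝ E] {f g : E → ℝ}

section Gradient

variable [CompleteSpace E]

theorem gradient_eq_zero_of_notMem {K : Set E} (hK : IsClosed K) (hf : ∀ x ∉ K, f x = 0) :
    ∀ x ∉ K, ∇ f x = 0 := fun x hx => by
  have hzero : f =ᶠ[𝓝 x] fun _ => 0 := by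
    filter_upwards [hK.isOpen_compl.mem_nhds hx] with y hy using hf y hy
  rw [hzero.gradient_eq, gradient_fun_const]

theorem continuous_gradient (hf : ContDiff ℝ 1 f) : Continuous (∇ f) :=
  (toDual ℝ E).symm.continuous.comp (hf.continuous_fderiv one_ne_zero)

theorem inner_gradient_gradient_eq_sum {ι : Type*} [Fintype ι]
    (b : OrthonormalBasis ι ℝ E) (f g : E → ℝ) (x : E) :
    ⟪∇ f x, ∇ g x⟫ = ∑ i, fderiv ℝ f x (b i) * fderiv ℝ g x (b i) := by
  rw [← b.sum_inner_mul_inner]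
  simp_rw [inner_gradient_left, inner_gradient_right, conj_trivial]

end Gradient

variable [FiniteDimensional ℝ E]

theorem laplacian_eq_sum_fderiv_fderiv {ι : Type*} [Fintype ι] (b : OrthonormalBasis ι ℝ E)
    (hg : ContDiff ℝ 2 g) (x : E) :
    Δ g x = ∑ i, fderiv ℝ (fun y => fderiv ℝ g y (b i)) x (b i) := by
  have hg' : DifferentiableAt ℝ (fderiv ℝ g) x :=
    (hg.fderiv_right (m := 1) le_rfl).differentiable one_ne_zero x
  simp_rw [laplacian_eq_iteratedFDeriv_orthonormalBasis g b, iteratedFDeriv_two_apply]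
  simp [fderiv_clm_apply hg' (differentiableAt_const _)]

theorem continuous_laplacian (hf : ContDiff ℝ 2 f) :
    Continuous (Δ f) := by
  rw [laplacian_eq_iteratedFDeriv_stdOrthonormalBasis]
  exact continuous_finsetSum _ fun i _ =>
    (hf.continuous_iteratedFDeriv le_rfl).eval_const _

variable [MeasurableSpace E] [BorelSpace E] {μ : Measure E} [μ.IsAddHaarMeasure]

theorem integrable_inner_gradient (hf : ContDiff ℝ 1 f) (hg : ContDiff ℝ 1 g)
    (hfs : HasCompactSupport f) : Integrable (fun x => ⟪∇ f x, ∇ g x⟫) μ := by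
  refine ((continuous_gradient hf).inner
    (continuous_gradient hg)).integrable_of_hasCompactSupport (.intro hfs fun x hx => ?_)
  rw [gradient_eq_zero_of_notMem (isClosed_tsupport f)
    (fun _ => image_eq_zero_of_notMem_tsupport) x hx, inner_zero_left]

theorem integral_inner_gradient_eq_neg_integral_mul_laplacian (hf : ContDiff ℝ 1 f)
    (hg : ContDiff ℝ 2 g) (hfs : HasCompactSupport f) :
    ∫ x, ⟪∇ f x, ∇ g x⟫ ∂μ = -∫ x, f x * Δ g x ∂μ := by
  set b := stdOrthonormalBasis ℝ E
  have hg' : ∀ i, ContDiff ℝ 1 fun x => fderiv ℝ g x (b i) := fun i =>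
    (hg.fderiv_right le_rfl).clm_apply contDiff_const
  have hint : ∀ i, Integrable (fun x => fderiv ℝ f x (b i) * fderiv ℝ g x (b i)) μ := fun i =>
    (((hf.continuous_fderiv one_ne_zero).clm_apply continuous_const).mul
      (hg' i).continuous).integrable_of_hasCompactSupport (hfs.fderiv_apply ℝ _).mul_right
  have hint' : ∀ i, Integrable
      (fun x => f x * fderiv ℝ (fun y => fderiv ℝ g y (b i)) x (b i)) μ := fun i =>
    (hf.continuous.mul (((hg' i).continuous_fderiv one_ne_zero).clm_apply
      continuous_const)).integrable_of_hasCompactSupport hfs.mul_right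
  calc ∫ x, ⟪∇ f x, ∇ g x⟫ ∂μ
      = ∑ i, ∫ x, fderiv ℝ f x (b i) * fderiv ℝ g x (b i) ∂μ := by
        simp_rw [inner_gradient_gradient_eq_sum b, integral_finsetSum _ fun i _ => hint i]
    _ = ∑ i, -∫ x, f x * fderiv ℝ (fun y => fderiv ℝ g y (b i)) x (b i) ∂μ :=
        Finset.sum_congr rfl fun i _ =>
          integral_fderiv_mul_eq_neg_integral_mul_fderiv hf (hg' i) hfs (b i)
    _ = -∫ x, f x * Δ g x ∂μ := by
        simp_rw [laplacian_eq_sum_fderiv_fderiv b hg, Finset.mul_sum,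
          integral_finsetSum _ fun i _ => hint' i, Finset.sum_neg_distrib]

end Green

section EnergyDensity

variable {E : Type*} [NormedAddCommGroup E] [InnerProductSpace ℝ E] [CompleteSpace E]
  {V : E → ℝ} {u : ℝ → E → ℝ}

theorem continuous_uncurry_gradient (hu : ContDiff ℝ 1 (uncurry u)) :
    Continuous (uncurry fun t x => ∇ (u t) x) := by
  have hflip : ContDiff ℝ 1 (uncurry fun p : ℝ × E => u p.1) :=
    hu.comp (f := fun q : (ℝ × E) × E => (q.1.1, q.2)) (by fun_prop)
  exact (toDual ℝ E).symm.continuous.comp (hflip.fderiv contDiff_snd (n := 0) le_rfl).continuous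

theorem hasDerivAt_gradient_timeDeriv (hu : ContDiff ℝ 2 (uncurry u)) (t : ℝ) (x : E) :
    HasDerivAt (fun s => ∇ (u s) x) (∇ (timeDeriv u t) x) t :=
  (toDual ℝ E).symm.toContinuousLinearEquiv.toContinuousLinearMap.hasFDerivAt.comp_hasDerivAt t
    (hasDerivAt_fderiv_timeDeriv hu t x)

/-- The density `|∂ₜu|² + |∇u|² + V|u|²`, whose integral over space is twice the energy. -/
def energyDensity (V : E → ℝ) (u : ℝ → E → ℝ) (t : ℝ) (x : E) : ℝ :=
  timeDeriv u t x ^ 2 + ‖∇ (u t) x‖ ^ 2 + V x * u t x ^ 2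

/-- The time derivative of `energyDensity V u`, computed by the product rule. -/
def energyDensityDeriv (V : E → ℝ) (u : ℝ → E → ℝ) (t : ℝ) (x : E) : ℝ :=
  2 * (timeDeriv u t x * (timeDeriv (timeDeriv u) t x + V x * u t x) +
    ⟪∇ (timeDeriv u t) x, ∇ (u t) x⟫)

theorem hasDerivAt_energyDensity (hu : ContDiff ℝ 2 (uncurry u)) (t : ℝ) (x : E) :
    HasDerivAt (fun s => energyDensity V u s x) (energyDensityDeriv V u t x) t := by
  have hu_deriv := hasDerivAt_timeDeriv (hu.differentiable two_ne_zero) t x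
  have hut_deriv := hasDerivAt_timeDeriv
    ((contDiff_uncurry_timeDeriv hu (m := 1) le_rfl).differentiable one_ne_zero) t x
  refine (((hut_deriv.pow 2).add (hasDerivAt_gradient_timeDeriv hu t x).norm_sq).add
    ((hu_deriv.pow 2).const_mul (V x))).congr_deriv ?_
  rw [energyDensityDeriv, real_inner_comm]
  push_cast
  ring

theorem continuous_energyDensity (hV : Continuous V) (hu : ContDiff ℝ 1 (uncurry u)) (t : ℝ) :
    Continuous (energyDensity V u t) := by
  have hut := (contDiff_uncurry_timeDeriv hu (m := 0) le_rfl).continuous.uncurry_left t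
  have hgrad := (continuous_uncurry_gradient hu).uncurry_left t
  have hu' := hu.continuous.uncurry_left t
  unfold energyDensity
  fun_prop

theorem continuous_uncurry_energyDensityDeriv (hV : Continuous V)
    (hu : ContDiff ℝ 2 (uncurry u)) : Continuous (uncurry (energyDensityDeriv V u)) := by
  have hut := contDiff_uncurry_timeDeriv hu (m := 1) le_rfl
  have hutt := (contDiff_uncurry_timeDeriv hut (m := 0) le_rfl).continuous
  have hgrad := continuous_uncurry_gradient (hu.of_le one_le_two)
  have hgradt := continuous_uncurry_gradient hut
  exact continuous_const.mul ((hut.continuous.mul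
    (hutt.add ((hV.comp continuous_snd).mul hu.continuous))).add (hgradt.inner hgrad))

end EnergyDensity

section EnergyBalance

variable {E : Type*} [NormedAddCommGroup E] [InnerProductSpace ℝ E] [FiniteDimensional ℝ E]
  [MeasurableSpace E] [BorelSpace E] {μ : Measure E} [μ.IsAddHaarMeasure] {V : E → ℝ}
  {u : ℝ → E → ℝ} {t : ℝ}

theorem integral_energyDensityDeriv (hV : Continuous V) (hu : ContDiff ℝ 2 (uncurry u))
    (hsupp : HasCompactSupport (timeDeriv u t)) :
    ∫ x, energyDensityDeriv V u t x ∂μ = 2 * ∫ x, timeDeriv u t x *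
      (timeDeriv (timeDeriv u) t x - Δ (u t) x + V x * u t x) ∂μ := by
  have hut := contDiff_uncurry_timeDeriv hu (m := 1) le_rfl
  have hut_slice : ContDiff ℝ 1 (timeDeriv u t) := hut.comp (contDiff_prodMk_right t)
  have hu_slice : ContDiff ℝ 2 (u t) := hu.comp (contDiff_prodMk_right t)
  have hutt : Continuous (timeDeriv (timeDeriv u) t) :=
    (contDiff_uncurry_timeDeriv hut (m := 0) le_rfl).continuous.uncurry_left t
  have hint : ∀ g : E → ℝ, Continuous g → Integrable (fun x => timeDeriv u t x * g x) μ :=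
    fun g hg => (hut_slice.continuous.mul hg).integrable_of_hasCompactSupport hsupp.mul_right
  have hgrad_int : Integrable (fun x => ⟪∇ (timeDeriv u t) x, ∇ (u t) x⟫) μ :=
    integrable_inner_gradient hut_slice (hu_slice.of_le one_le_two) hsupp
  calc ∫ x, energyDensityDeriv V u t x ∂μ
      = 2 * (∫ x, timeDeriv u t x * (timeDeriv (timeDeriv u) t x + V x * u t x) ∂μ
          + ∫ x, ⟪∇ (timeDeriv u t) x, ∇ (u t) x⟫ ∂μ) := by
        rw [← integral_add (hint _ (by fun_prop)) hgrad_int, ← integral_const_mul]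
        rfl
    _ = 2 * (∫ x, timeDeriv u t x * (timeDeriv (timeDeriv u) t x + V x * u t x) ∂μ
          - ∫ x, timeDeriv u t x * Δ (u t) x ∂μ) := by
        rw [integral_inner_gradient_eq_neg_integral_mul_laplacian hut_slice hu_slice hsupp,
          sub_eq_add_neg]
    _ = _ := by
        rw [← integral_sub (hint _ (by fun_prop)) (hint _ (continuous_laplacian hu_slice))]
        congr! 3 with x
        ring

theorem hasDerivWithinAt_integral_energyDensity {K : Set E} {S : Set ℝ} (hV : Continuous V)
    (hu : ContDiff ℝ 2 (uncurry u)) (hK : IsCompact K) (hsupp : ∀ s ∈ S, ∀ x ∉ K, u s x = 0)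
    (hS : UniqueDiffOn ℝ S) (ht : t ∈ S) :
    HasDerivWithinAt (fun s => ∫ x, energyDensity V u s x ∂μ)
      (2 * ∫ x, timeDeriv u t x *
        (timeDeriv (timeDeriv u) t x - Δ (u t) x + V x * u t x) ∂μ) S t := by
  have hut_supp : ∀ s ∈ S, ∀ x ∉ K, timeDeriv u s x = 0 := fun s hs =>
    timeDeriv_eq_zero_of_notMem (hu.differentiable two_ne_zero) hsupp (hS s hs) hs
  have hdensity_supp : ∀ s ∈ S, ∀ x ∉ K, energyDensity V u s x = 0 := fun s hs x hx => by
    simp [energyDensity, hut_supp s hs x hx, hsupp s hs x hx,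
      gradient_eq_zero_of_notMem hK.isClosed (hsupp s hs) x hx]
  rw [← integral_energyDensityDeriv hV hu (.intro hK (hut_supp t ht))]
  exact hasDerivWithinAt_integral_of_compact_support hK
    (continuous_energyDensity hV (hu.of_le one_le_two))
    (continuous_uncurry_energyDensityDeriv hV hu) (hasDerivAt_energyDensity hu) hdensity_supp
    (hS t ht) ht

end EnergyBalance

section DampedWave

variable {n : ℕ} {V : EuclideanSpace ℝ (Fin n) → ℝ} {u : ℝ → EuclideanSpace ℝ (Fin n) → ℝ}
  {K : Set (EuclideanSpace ℝ (Fin n))} {S : Set ℝ}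

theorem lap_eq_laplacian (f : EuclideanSpace ℝ (Fin n) → ℝ) : lap f = Δ f := by
  ext x
  simp [lap, laplacian_eq_iteratedFDeriv_orthonormalBasis f (EuclideanSpace.basisFun (Fin n) ℝ)]

theorem hasDerivWithinAt_energy_of_damped_wave (hV : Continuous V)
    (hu : ContDiff ℝ 2 (uncurry u)) (hK : IsCompact K) (hsupp : ∀ s ∈ S, ∀ x ∉ K, u s x = 0)
    (hS : UniqueDiffOn ℝ S)
    (hPDE : ∀ s ∈ S, ∀ x,
      timeDeriv (timeDeriv u) s x - lap (u s) x + V x * u s x + timeDeriv u s x = 0)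
    {t : ℝ} (ht : t ∈ S) :
    HasDerivWithinAt (energy V u) (-∫ x, timeDeriv u t x ^ 2) S t := by
  have henergy : energy V u = fun s => 1 / 2 * ∫ x, energyDensity V u s x := rfl
  rw [henergy]
  refine ((hasDerivWithinAt_integral_energyDensity hV hu hK hsupp hS ht).const_mul
    (1 / 2)).congr_deriv ?_
  rw [← mul_assoc, one_div_mul_cancel two_ne_zero, one_mul, ← integral_neg]
  refine integral_congr_ae (.of_forall fun x => ?_)
  dsimp only
  rw [← lap_eq_laplacian, eq_neg_of_add_eq_zero_left (hPDE t ht x)]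
  ring

theorem continuousOn_integral_timeDeriv_sq (hu : ContDiff ℝ 1 (uncurry u)) (hK : IsCompact K)
    (hsupp : ∀ s ∈ S, ∀ x ∉ K, u s x = 0) (hS : UniqueDiffOn ℝ S) :
    ContinuousOn (fun s => ∫ x, timeDeriv u s x ^ 2) S := by
  refine continuousOn_integral_of_compact_support hK ?_ fun s x hs hx => ?_
  · exact ((contDiff_uncurry_timeDeriv hu (m := 0) le_rfl).continuous.pow 2).continuousOn
  · rw [timeDeriv_eq_zero_of_notMem (hu.differentiable one_ne_zero) hsupp (hS s hs) hs x hx,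
      zero_pow two_ne_zero]

end DampedWave

theorem mul_add_integral_mul_eq_of_hasDerivWithinAt_neg {w w' e d : ℝ → ℝ} {a b : ℝ}
    (hw : ∀ s ∈ uIcc a b, HasDerivWithinAt w (w' s) (uIcc a b) s)
    (hw' : IntervalIntegrable w' volume a b)
    (he : ∀ s ∈ uIcc a b, HasDerivWithinAt e (-d s) (uIcc a b) s)
    (hd : IntervalIntegrable d volume a b) :
    w b * e b + ∫ s in a..b, w s * d s = w a * e a + ∫ s in a..b, w' s * e s := by
  have hparts :=
    intervalIntegral.integral_mul_deriv_eq_deriv_mul_of_hasDerivWithinAt hw he hw' hd.neg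
  simp only [mul_neg, intervalIntegral.integral_neg] at hparts
  linarith

theorem damped_wave_weighted_energy_identity_general {n : ℕ} {V : EuclideanSpace ℝ (Fin n) → ℝ}
    (hV : Continuous V) {u : ℝ → EuclideanSpace ℝ (Fin n) → ℝ}
    (hu : ContDiff ℝ 2 (fun p : ℝ × EuclideanSpace ℝ (Fin n) => u p.1 p.2))
    (hPDE : ∀ t, 0 ≤ t → ∀ x,
      deriv (fun s => deriv (fun r => u r x) s) t - lap (u t) x + V x * u t x
        + deriv (fun s => u s x) t = 0)
    (hsupp : ∀ T, 0 < T → ∃ R, ∀ t ∈ Icc (0 : ℝ) T, ∀ x, R ≤ ‖x‖ → u t x = 0)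
    {t : ℝ} (ht : 0 ≤ t) :
    (1 + t) * energy V u t
        + (∫ s in (0 : ℝ)..t, (1 + s) * ∫ x, (deriv (fun r => u r x) s) ^ 2)
      = energy V u 0 + ∫ s in (0 : ℝ)..t, energy V u s := by
  have hT : 0 < t + 1 := by positivity
  obtain ⟨R, hR⟩ := hsupp (t + 1) hT
  have hball : IsCompact (Metric.closedBall (0 : EuclideanSpace ℝ (Fin n)) R) :=
    isCompact_closedBall 0 R
  have hvanish : ∀ s ∈ Icc 0 (t + 1), ∀ x ∉ Metric.closedBall 0 R, u s x = 0 := fun s hs x hx =>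
    hR s hs x (not_le.1 (mt mem_closedBall_zero_iff.2 hx)).le
  have hsub : uIcc 0 t ⊆ Icc 0 (t + 1) :=
    uIcc_of_le ht ▸ Icc_subset_Icc_right (le_add_of_nonneg_right zero_le_one)
  have hdissipation : ∀ s ∈ uIcc 0 t,
      HasDerivWithinAt (energy V u) (-∫ x, timeDeriv u s x ^ 2) (uIcc 0 t) s := fun s hs =>
    (hasDerivWithinAt_energy_of_damped_wave hV hu hball hvanish (uniqueDiffOn_Icc hT)
      (fun r hr => hPDE r hr.1) (hsub hs)).mono hsub
  have hcont : ContinuousOn (fun s => ∫ x, timeDeriv u s x ^ 2) (uIcc 0 t) :=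
    (continuousOn_integral_timeDeriv_sq (hu.of_le one_le_two) hball hvanish
      (uniqueDiffOn_Icc hT)).mono hsub
  simpa [timeDeriv] using mul_add_integral_mul_eq_of_hasDerivWithinAt_neg
    (fun s _ => ((hasDerivAt_id' s).const_add 1).hasDerivWithinAt) intervalIntegrable_const
    hdissipation hcont.intervalIntegrable

theorem damped_wave_weighted_energy_identity (n : ℕ) (hn : 1 ≤ n)
    (V : EuclideanSpace ℝ (Fin n) → ℝ)
    (hVcont : Continuous V) (hVbdd : ∃ M, ∀ x, |V x| ≤ M)
    (hVnonneg : ∀ x, 0 ≤ V x)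
    (u : ℝ → EuclideanSpace ℝ (Fin n) → ℝ)
    (hu : ContDiff ℝ (⊤ : ℕ∞) (fun p : ℝ × EuclideanSpace ℝ (Fin n) => u p.1 p.2))
    (hPDE : ∀ t, 0 ≤ t → ∀ x,
      deriv (fun s => deriv (fun r => u r x) s) t - lap (u t) x + V x * u t x
        + deriv (fun s => u s x) t = 0)
    (hsupp : ∀ T, 0 < T → ∃ R, 0 < R ∧ ∀ t ∈ Set.Icc (0:ℝ) T, ∀ x,
      R ≤ ‖x‖ → u t x = 0)
    :
    ∀ t, 0 ≤ t →
      (1 + t) * energy V u t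
        + (∫ s in (0:ℝ)..t, (1 + s) * ∫ x, (deriv (fun r => u r x) s) ^ 2)
      = energy V u 0 + ∫ s in (0:ℝ)..t, energy V u s := by
  exact fun t ht => damped_wave_weighted_energy_identity_general hVcont
    (contDiff_infty.1 hu 2) hPDE
    (fun T hT => (hsupp T hT).imp fun _ hR => hR.2) ht
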